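/- Define a sequence of square integer matrices by B_0 = (0) (the 1×1 zero matrix) and, for n ≥ 0, B_{n+1} = [[0, 2·I + B_n],[I, 0]] in block form, where I is the identity matrix of size 2^n (so B_n has size 2^n). Then for every n ≥ 0, the matrix B_n, viewed over ℝ, has 2^n pairwise distinct real eigenvalues, namely 2·cos((2r+1)π/2^{n+1}) for r = 0, 1, …, 2^n − 1; equivalently, the characteristic polynomial of B_n equals ∏_{r=0}^{2^n−1} (X − 2·cos((2r+1)π/2^{n+1})). -/

import Mathlib

open Real Polynomial

/-- Identification of `Fin 2^n ⊕ Fin 2^n` with `Fin 2^(n+1)` giving block decompositions. -/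
def pow2Equiv (n : ℕ) : Fin (2 ^ n) ⊕ Fin (2 ^ n) ≃ Fin (2 ^ (n + 1)) :=
  finSumFinEquiv.trans (finCongr (by rw [pow_succ, mul_two]))

/-- `B 0 = (0)`, and `B (n+1) = [[0, 2·I + B n],[I, 0]]` in block form. -/
def B : (n : ℕ) → Matrix (Fin (2 ^ n)) (Fin (2 ^ n)) ℤ
  | 0 => 0
  | n + 1 =>
      Matrix.reindex (pow2Equiv n) (pow2Equiv n)
        (Matrix.fromBlocks 0 (2 • (1 : Matrix (Fin (2 ^ n)) (Fin (2 ^ n)) ℤ) + B n) 1 0)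

open Matrix in
/-- The determinant of `x - [[0, M], [1, 0]]` is that of `x ^ 2 - M`. -/
theorem det_scalar_sub_fromBlocks_zero_one {m R : Type*} [Fintype m] [DecidableEq m] [CommRing R]
    (M : Matrix m m R) (x : R) :
    (scalar (m ⊕ m) x - fromBlocks 0 M 1 0).det = (scalar m (x ^ 2) - M).det := by
  have hblock : fromBlocks 1 (scalar m (x - 1)) 0 1 * (scalar (m ⊕ m) x - fromBlocks 0 M 1 0) =
      fromBlocks 1 (scalar m (x ^ 2 - x) - M) (-1) (scalar m x) := by
    have hscalar : scalar (m ⊕ m) x = fromBlocks (scalar m x) 0 0 (scalar m x) := by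
      simp [scalar_apply, fromBlocks_diagonal]
    have hsub : fromBlocks (scalar m x) 0 0 (scalar m x) - fromBlocks 0 M 1 0 =
        fromBlocks (scalar m x) (-M) (-1) (scalar m x) := by
      rw [sub_eq_add_neg, fromBlocks_neg, fromBlocks_add]
      simp
    rw [hscalar, hsub, fromBlocks_multiply]
    congr 1
    · simp [map_sub]
    · rw [one_mul, ← map_mul, neg_add_eq_sub]
      congr 2
      ring
    · simp
    · simp
  have hdet := congrArg det hblock
  rw [det_mul, det_fromBlocks_zero₂₁, det_one, one_mul, one_mul, det_fromBlocks_one₁₁] at hdet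
  rw [hdet]
  congr 1
  rw [map_sub, neg_one_mul]
  abel

theorem eval_charpoly_B_succ (n : ℕ) (x : ℝ) :
    ((B (n + 1)).map (Int.cast : ℤ → ℝ)).charpoly.eval x =
      ((B n).map (Int.cast : ℤ → ℝ)).charpoly.eval (x ^ 2 - 2) := by
  have hB : (B (n + 1)).map (Int.cast : ℤ → ℝ) = Matrix.reindex (pow2Equiv n) (pow2Equiv n)
      (Matrix.fromBlocks 0 (Matrix.scalar _ 2 + (B n).map (Int.cast : ℤ → ℝ)) 1 0) := by
    rw [B, Matrix.reindex_apply, Matrix.reindex_apply, ← Matrix.submatrix_map,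
      Matrix.fromBlocks_map]
    congr 2
    · simp
    · ext i j
      by_cases h : i = j <;> simp [h, Matrix.ofNat_apply]
    · simp
    · simp
  rw [hB, Matrix.charpoly_reindex, Matrix.eval_charpoly, Matrix.eval_charpoly,
    det_scalar_sub_fromBlocks_zero_one, map_sub, sub_sub]

theorem eval_charpoly_B_two_mul_cos (n : ℕ) (θ : ℝ) :
    ((B n).map (Int.cast : ℤ → ℝ)).charpoly.eval (2 * Real.cos θ) =
      2 * Real.cos (2 ^ n * θ) := by
  induction n generalizing θ with
  | zero => simp [B]
  | succ n ih =>
    have h : (2 * Real.cos θ) ^ 2 - 2 = 2 * Real.cos (2 * θ) := by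
      rw [Real.cos_two_mul]
      ring
    rw [eval_charpoly_B_succ, h, ih, pow_succ, mul_assoc]

theorem injOn_two_mul_cos_odd_mul_pi_div (n : ℕ) :
    Set.InjOn (fun r : ℕ => 2 * Real.cos ((2 * (r : ℝ) + 1) * π / 2 ^ (n + 1)))
      (Finset.range (2 ^ n)) := by
  have hmem : ∀ r ∈ (Finset.range (2 ^ n) : Set ℕ),
      (2 * (r : ℝ) + 1) * π / 2 ^ (n + 1) ∈ Set.Icc 0 π := by
    intro r hr
    have hr' : (r : ℝ) + 1 ≤ 2 ^ n := by
      exact_mod_cast Finset.mem_range.mp (Finset.mem_coe.mp hr)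
    refine ⟨by positivity, ?_⟩
    rw [div_le_iff₀ (by positivity), mul_comm, pow_succ]
    exact mul_le_mul_of_nonneg_left (by linarith) Real.pi_pos.le
  intro r hr s hs h
  have hcos := Real.injOn_cos (hmem r hr) (hmem s hs) (mul_left_cancel₀ two_ne_zero h)
  have hpi := Real.pi_ne_zero
  field_simp at hcos
  have : (r : ℝ) = s := by linarith
  exact_mod_cast this

/-- over `ℝ`, `B n` has the `2^n` pairwise distinct eigenvalues
`2·cos((2r+1)π/2^(n+1))`, `0 ≤ r < 2^n`; i.e. its characteristic polynomial is
`∏_{r=0}^{2^n−1} (X − 2·cos((2r+1)π/2^(n+1)))`. -/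
theorem stmt_6 (n : ℕ) :
    Function.Injective
      (fun r : Fin (2 ^ n) => 2 * Real.cos ((2 * (r : ℕ) + 1) * π / 2 ^ (n + 1))) ∧
    Matrix.charpoly ((B n).map (Int.cast : ℤ → ℝ)) =
      ∏ r ∈ Finset.range (2 ^ n),
        (Polynomial.X - Polynomial.C (2 * Real.cos ((2 * (r : ℝ) + 1) * π / 2 ^ (n + 1)))) := by
  have hinj := injOn_two_mul_cos_odd_mul_pi_div n
  refine ⟨fun r s h => Fin.ext (hinj (by simp) (by simp) h), ?_⟩
  have hmonic := Matrix.charpoly_monic ((B n).map (Int.cast : ℤ → ℝ))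
  refine Polynomial.eq_of_monic_of_dvd_of_natDegree_le
    (Polynomial.monic_prod_of_monic _ _ fun r _ => Polynomial.monic_X_sub_C _) hmonic ?_ ?_
  · refine Finset.prod_dvd_of_coprime (fun r hr s hs hrs =>
      Polynomial.isCoprime_X_sub_C_of_isUnit_sub
        (sub_ne_zero.mpr fun h => hrs (hinj hr hs h)).isUnit) fun r _ => ?_
    rw [Polynomial.dvd_iff_isRoot, Polynomial.IsRoot.def, eval_charpoly_B_two_mul_cos]
    have harg : 2 ^ n * ((2 * (r : ℝ) + 1) * π / 2 ^ (n + 1)) = (2 * (r : ℤ) + 1) * π / 2 := by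
      rw [pow_succ]
      push_cast
      field_simp
    rw [harg, Real.cos_eq_zero_iff.mpr ⟨r, rfl⟩, mul_zero]
  · rw [Matrix.charpoly_natDegree_eq_dim, Polynomial.natDegree_finsetProd_X_sub_C_eq_card]
    simp
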